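/- With the notation of the context, fix ε = 1 or ε = −1, and let ℛ be any linear map from the space of skew-symmetric endomorphisms of ℝ⁴ to itself. Then the following are equivalent: (a) for all J₁ ∈ Λ₊ and J₂ ∈ Λ₋ with J₁∘J₁ = −id and J₂∘J₂ = −id, and all X, Y, Z, U ∈ ℝ⁴, ⟪ℛ(A(X,Y) − A(J₁X,J₁Y)), A(Z,U) − A(J₂Z,J₂U)⟫ = ε·⟪ℛ(A(J₁X,Y) + A(X,J₁Y)), A(J₂Z,U) + A(Z,J₂U)⟫; (b) ⟪ℛ(P), Q⟫ = 0 for all P ∈ Λ₊ and all Q ∈ Λ₋. -/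

import Mathlib

open scoped RealInnerProductSpace

noncomputable section

/-- `V₄` is `ℝ⁴` with its standard inner product. -/
abbrev V₄ := EuclideanSpace ℝ (Fin 4)

/-- `S₁⁺` : `e₁↦e₂, e₂↦−e₁, e₃↦e₄, e₄↦−e₃`. -/
def S1p : V₄ →ₗ[ℝ] V₄ :=
  Matrix.toEuclideanLin !![0,-1,0,0; 1,0,0,0; 0,0,0,-1; 0,0,1,0]

/-- `S₂⁺` : `e₁↦e₃, e₃↦−e₁, e₄↦e₂, e₂↦−e₄`. -/
def S2p : V₄ →ₗ[ℝ] V₄ :=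
  Matrix.toEuclideanLin !![0,0,-1,0; 0,0,0,1; 1,0,0,0; 0,-1,0,0]

/-- `S₃⁺` : `e₁↦e₄, e₄↦−e₁, e₂↦e₃, e₃↦−e₂`. -/
def S3p : V₄ →ₗ[ℝ] V₄ :=
  Matrix.toEuclideanLin !![0,0,0,-1; 0,0,-1,0; 0,1,0,0; 1,0,0,0]

/-- `S₁⁻` : `e₁↦e₂, e₂↦−e₁, e₃↦−e₄, e₄↦e₃`. -/
def S1m : V₄ →ₗ[ℝ] V₄ :=
  Matrix.toEuclideanLin !![0,-1,0,0; 1,0,0,0; 0,0,0,1; 0,0,-1,0]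

/-- `S₂⁻` : `e₁↦e₃, e₃↦−e₁, e₂↦e₄, e₄↦−e₂`. -/
def S2m : V₄ →ₗ[ℝ] V₄ :=
  Matrix.toEuclideanLin !![0,0,-1,0; 0,0,0,-1; 1,0,0,0; 0,1,0,0]

/-- `S₃⁻` : `e₁↦e₄, e₄↦−e₁, e₂↦−e₃, e₃↦e₂`. -/
def S3m : V₄ →ₗ[ℝ] V₄ :=
  Matrix.toEuclideanLin !![0,0,0,-1; 0,0,1,0; 0,-1,0,0; 1,0,0,0]

/-- `Λ₊`, the span of `S₁⁺, S₂⁺, S₃⁺`: the image of the space of self-dual 2-vectors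
under the identification `a ↦ K_a`. -/
def Lp : Submodule ℝ (V₄ →ₗ[ℝ] V₄) := Submodule.span ℝ {S1p, S2p, S3p}

/-- `Λ₋`, the span of `S₁⁻, S₂⁻, S₃⁻`: the image of the space of anti-self-dual
2-vectors under the identification `a ↦ K_a`. -/
def Lm : Submodule ℝ (V₄ →ₗ[ℝ] V₄) := Submodule.span ℝ {S1m, S2m, S3m}

/-- The skew-symmetric endomorphism `A(X,Y) : Z ↦ ⟨X,Z⟩Y − ⟨Y,Z⟩X` of `ℝ⁴`,
corresponding to the 2-vector `X∧Y`. -/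
def A (X Y : V₄) : V₄ →ₗ[ℝ] V₄ :=
  LinearMap.smulRight (innerₛₗ ℝ X) Y - LinearMap.smulRight (innerₛₗ ℝ Y) X

/-- The inner product of 2-vectors transported to skew-symmetric endomorphisms:
`⟪P,Q⟫ = −¼·trace(P∘Q)`. -/
def ipE (P Q : V₄ →ₗ[ℝ] V₄) : ℝ := -(1 / 4 : ℝ) * LinearMap.trace ℝ V₄ (P ∘ₗ Q)

lemma A_apply (X Y Z : V₄) (i : Fin 4) :
    A X Y Z i = (X 0 * Z 0 + X 1 * Z 1 + X 2 * Z 2 + X 3 * Z 3) * Y i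
      - (Y 0 * Z 0 + Y 1 * Z 1 + Y 2 * Z 2 + Y 3 * Z 3) * X i := by
  simp [A, PiLp.inner_apply, Fin.sum_univ_four]
  ring

lemma S1p_apply (Z : V₄) : S1p Z = !₂[-Z 1, Z 0, -Z 3, Z 2] := by
  ext i; fin_cases i <;>
    simp [S1p, Matrix.toLpLin_apply, Matrix.mulVec, dotProduct, Fin.sum_univ_four]

lemma S2p_apply (Z : V₄) : S2p Z = !₂[-Z 2, Z 3, Z 0, -Z 1] := by
  ext i; fin_cases i <;>
    simp [S2p, Matrix.toLpLin_apply, Matrix.mulVec, dotProduct, Fin.sum_univ_four]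

lemma S3p_apply (Z : V₄) : S3p Z = !₂[-Z 3, -Z 2, Z 1, Z 0] := by
  ext i; fin_cases i <;>
    simp [S3p, Matrix.toLpLin_apply, Matrix.mulVec, dotProduct, Fin.sum_univ_four]

lemma S1m_apply (Z : V₄) : S1m Z = !₂[-Z 1, Z 0, Z 3, -Z 2] := by
  ext i; fin_cases i <;>
    simp [S1m, Matrix.toLpLin_apply, Matrix.mulVec, dotProduct, Fin.sum_univ_four]

lemma S2m_apply (Z : V₄) : S2m Z = !₂[-Z 2, -Z 3, Z 0, Z 1] := by
  ext i; fin_cases i <;>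
    simp [S2m, Matrix.toLpLin_apply, Matrix.mulVec, dotProduct, Fin.sum_univ_four]

lemma S3m_apply (Z : V₄) : S3m Z = !₂[-Z 3, Z 2, -Z 1, Z 0] := by
  ext i; fin_cases i <;>
    simp [S3m, Matrix.toLpLin_apply, Matrix.mulVec, dotProduct, Fin.sum_univ_four]

lemma mem_Lp (M : V₄ →ₗ[ℝ] V₄) : M ∈ Lp ↔ ∃ a b c : ℝ, a • S1p + b • S2p + c • S3p = M := by
  rw [Lp, Submodule.mem_span_triple]

lemma mem_Lm (M : V₄ →ₗ[ℝ] V₄) : M ∈ Lm ↔ ∃ a b c : ℝ, a • S1m + b • S2m + c • S3m = M := by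
  rw [Lm, Submodule.mem_span_triple]

lemma diff_mem_Lp (J : V₄ →ₗ[ℝ] V₄) (hJ : J ∈ Lp) (hJJ : J ∘ₗ J = -LinearMap.id)
    (X Y : V₄) : A X Y - A (J X) (J Y) ∈ Lp := by
  obtain ⟨a, b, c, rfl⟩ := (mem_Lp J).1 hJ
  have h : a ^ 2 + b ^ 2 + c ^ 2 = 1 := by
    have := congrArg (fun v : V₄ => v 0) (LinearMap.congr_fun hJJ !₂[1, 0, 0, 0])
    simp [S1p_apply, S2p_apply, S3p_apply] at this
    linear_combination -this
  rw [mem_Lp]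
  set J := a • S1p + b • S2p + c • S3p with hJd
  refine ⟨(A X Y - A (J X) (J Y)) !₂[1, 0, 0, 0] 1, (A X Y - A (J X) (J Y)) !₂[1, 0, 0, 0] 2,
    (A X Y - A (J X) (J Y)) !₂[1, 0, 0, 0] 3, ?_⟩
  ext Z i
  fin_cases i <;> simp [hJd, A_apply, S1p_apply, S2p_apply, S3p_apply]
  · ring
  · linear_combination (1) * ((X 0 * Y 3 - X 3 * Y 0) - (X 1 * Y 2 - X 2 * Y 1)) * Z 2 * h + (-1) * ((X 0 * Y 2 - X 2 * Y 0) - (X 3 * Y 1 - X 1 * Y 3)) * Z 3 * h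
  · linear_combination (-1) * ((X 0 * Y 3 - X 3 * Y 0) - (X 1 * Y 2 - X 2 * Y 1)) * Z 1 * h + (1) * ((X 0 * Y 1 - X 1 * Y 0) - (X 2 * Y 3 - X 3 * Y 2)) * Z 3 * h
  · linear_combination (1) * ((X 0 * Y 2 - X 2 * Y 0) - (X 3 * Y 1 - X 1 * Y 3)) * Z 1 * h + (-1) * ((X 0 * Y 1 - X 1 * Y 0) - (X 2 * Y 3 - X 3 * Y 2)) * Z 2 * h

lemma sum_mem_Lp (J : V₄ →ₗ[ℝ] V₄) (hJ : J ∈ Lp)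
    (X Y : V₄) : A (J X) Y + A X (J Y) ∈ Lp := by
  obtain ⟨a, b, c, rfl⟩ := (mem_Lp J).1 hJ
  rw [mem_Lp]
  set J := a • S1p + b • S2p + c • S3p with hJd
  refine ⟨(A (J X) Y + A X (J Y)) !₂[1, 0, 0, 0] 1, (A (J X) Y + A X (J Y)) !₂[1, 0, 0, 0] 2,
    (A (J X) Y + A X (J Y)) !₂[1, 0, 0, 0] 3, ?_⟩
  ext Z i
  fin_cases i <;> simp [hJd, A_apply, S1p_apply, S2p_apply, S3p_apply] <;> ring

lemma S1p_eq : ∃ J X Y, J ∈ Lp ∧ J ∘ₗ J = -LinearMap.id ∧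
    S1p = A X Y - A (J X) (J Y) := by
  refine ⟨S2p, !₂[1, 0, 0, 0], !₂[0, 1, 0, 0],
    Submodule.subset_span (by simp), ?_, ?_⟩ <;>
  · ext Z i
    fin_cases i <;> simp [A_apply, S1p_apply, S2p_apply, S3p_apply]

lemma S2p_eq : ∃ J X Y, J ∈ Lp ∧ J ∘ₗ J = -LinearMap.id ∧
    S2p = A X Y - A (J X) (J Y) := by
  refine ⟨S1p, !₂[1, 0, 0, 0], !₂[0, 0, 1, 0],
    Submodule.subset_span (by simp), ?_, ?_⟩ <;>
  · ext Z i
    fin_cases i <;> simp [A_apply, S1p_apply, S2p_apply, S3p_apply]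

lemma S3p_eq : ∃ J X Y, J ∈ Lp ∧ J ∘ₗ J = -LinearMap.id ∧
    S3p = A X Y - A (J X) (J Y) := by
  refine ⟨S1p, !₂[1, 0, 0, 0], !₂[0, 0, 0, 1],
    Submodule.subset_span (by simp), ?_, ?_⟩ <;>
  · ext Z i
    fin_cases i <;> simp [A_apply, S1p_apply, S2p_apply, S3p_apply]

lemma diff_mem_Lm (J : V₄ →ₗ[ℝ] V₄) (hJ : J ∈ Lm) (hJJ : J ∘ₗ J = -LinearMap.id)
    (X Y : V₄) : A X Y - A (J X) (J Y) ∈ Lm := by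
  obtain ⟨a, b, c, rfl⟩ := (mem_Lm J).1 hJ
  have h : a ^ 2 + b ^ 2 + c ^ 2 = 1 := by
    have := congrArg (fun v : V₄ => v 0) (LinearMap.congr_fun hJJ !₂[1, 0, 0, 0])
    simp [S1m_apply, S2m_apply, S3m_apply] at this
    linear_combination -this
  rw [mem_Lm]
  set J := a • S1m + b • S2m + c • S3m with hJd
  refine ⟨(A X Y - A (J X) (J Y)) !₂[1, 0, 0, 0] 1, (A X Y - A (J X) (J Y)) !₂[1, 0, 0, 0] 2,
    (A X Y - A (J X) (J Y)) !₂[1, 0, 0, 0] 3, ?_⟩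
  ext Z i
  fin_cases i <;> simp [hJd, A_apply, S1m_apply, S2m_apply, S3m_apply]
  · ring
  · linear_combination (-1) * ((X 0 * Y 3 - X 3 * Y 0) + (X 1 * Y 2 - X 2 * Y 1)) * Z 2 * h + (1) * ((X 0 * Y 2 - X 2 * Y 0) + (X 3 * Y 1 - X 1 * Y 3)) * Z 3 * h
  · linear_combination (1) * ((X 0 * Y 3 - X 3 * Y 0) + (X 1 * Y 2 - X 2 * Y 1)) * Z 1 * h + (-1) * ((X 0 * Y 1 - X 1 * Y 0) + (X 2 * Y 3 - X 3 * Y 2)) * Z 3 * h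
  · linear_combination (-1) * ((X 0 * Y 2 - X 2 * Y 0) + (X 3 * Y 1 - X 1 * Y 3)) * Z 1 * h + (1) * ((X 0 * Y 1 - X 1 * Y 0) + (X 2 * Y 3 - X 3 * Y 2)) * Z 2 * h

lemma sum_mem_Lm (J : V₄ →ₗ[ℝ] V₄) (hJ : J ∈ Lm)
    (X Y : V₄) : A (J X) Y + A X (J Y) ∈ Lm := by
  obtain ⟨a, b, c, rfl⟩ := (mem_Lm J).1 hJ
  rw [mem_Lm]
  set J := a • S1m + b • S2m + c • S3m with hJd
  refine ⟨(A (J X) Y + A X (J Y)) !₂[1, 0, 0, 0] 1, (A (J X) Y + A X (J Y)) !₂[1, 0, 0, 0] 2,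
    (A (J X) Y + A X (J Y)) !₂[1, 0, 0, 0] 3, ?_⟩
  ext Z i
  fin_cases i <;> simp [hJd, A_apply, S1m_apply, S2m_apply, S3m_apply] <;> ring

lemma S1m_eq : ∃ J X Y, J ∈ Lm ∧ J ∘ₗ J = -LinearMap.id ∧
    S1m = A X Y - A (J X) (J Y) := by
  refine ⟨S2m, !₂[1, 0, 0, 0], !₂[0, 1, 0, 0],
    Submodule.subset_span (by simp), ?_, ?_⟩ <;>
  · ext Z i
    fin_cases i <;> simp [A_apply, S1m_apply, S2m_apply, S3m_apply]

lemma S2m_eq : ∃ J X Y, J ∈ Lm ∧ J ∘ₗ J = -LinearMap.id ∧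
    S2m = A X Y - A (J X) (J Y) := by
  refine ⟨S1m, !₂[1, 0, 0, 0], !₂[0, 0, 1, 0],
    Submodule.subset_span (by simp), ?_, ?_⟩ <;>
  · ext Z i
    fin_cases i <;> simp [A_apply, S1m_apply, S2m_apply, S3m_apply]

lemma S3m_eq : ∃ J X Y, J ∈ Lm ∧ J ∘ₗ J = -LinearMap.id ∧
    S3m = A X Y - A (J X) (J Y) := by
  refine ⟨S1m, !₂[1, 0, 0, 0], !₂[0, 0, 0, 1],
    Submodule.subset_span (by simp), ?_, ?_⟩ <;>
  · ext Z i
    fin_cases i <;> simp [A_apply, S1m_apply, S2m_apply, S3m_apply]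

lemma ipE_neg_left (P Q : V₄ →ₗ[ℝ] V₄) : ipE (-P) Q = -ipE P Q := by
  simp [ipE, LinearMap.neg_comp]

lemma A_neg_left (X Y : V₄) : A (-X) Y = -A X Y := by
  ext Z i; simp [A_apply]; ring

lemma A_neg_right (X Y : V₄) : A X (-Y) = -A X Y := by
  ext Z i; simp [A_apply]; ring

/-- `⟪R P, Q⟫` as a bilinear map. -/
def ipB (R : (V₄ →ₗ[ℝ] V₄) →ₗ[ℝ] (V₄ →ₗ[ℝ] V₄)) :
    (V₄ →ₗ[ℝ] V₄) →ₗ[ℝ] (V₄ →ₗ[ℝ] V₄) →ₗ[ℝ] ℝ :=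
  LinearMap.mk₂ ℝ (fun P Q => ipE (R P) Q)
    (by intros; simp [ipE, LinearMap.add_comp]; ring)
    (by intros; simp [ipE, LinearMap.smul_comp]; ring)
    (by intros; simp [ipE, LinearMap.comp_add]; ring)
    (by intros; simp [ipE, LinearMap.comp_smul]; ring)

/-- key algebraic step in Theorem 5.3.  For `ε = ±1` and any linear
operator `ℛ` on endomorphisms (playing the role of the curvature operator `ℛ^D` on
skew-symmetric endomorphisms ≅ 2-vectors), the identity (int), quantified over all pairs
`(J₁,J₂)` with `J₁` a unit self-dual and `J₂` a unit anti-self-dual 2-vector, is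
equivalent to `⟪ℛ(P),Q⟫ = 0` for all self-dual `P` and anti-self-dual `Q`. -/
theorem curvature_identity_iff_mixed_part_vanishes
    (ε : ℝ) (hε : ε = 1 ∨ ε = -1)
    (R : (V₄ →ₗ[ℝ] V₄) →ₗ[ℝ] (V₄ →ₗ[ℝ] V₄)) :
    (∀ J₁ J₂ : V₄ →ₗ[ℝ] V₄, J₁ ∈ Lp → J₂ ∈ Lm →
        J₁ ∘ₗ J₁ = -LinearMap.id → J₂ ∘ₗ J₂ = -LinearMap.id →
      ∀ X Y Z U : V₄,
        ipE (R (A X Y - A (J₁ X) (J₁ Y))) (A Z U - A (J₂ Z) (J₂ U)) =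
          ε * ipE (R (A (J₁ X) Y + A X (J₁ Y))) (A (J₂ Z) U + A Z (J₂ U))) ↔
    (∀ P Q : V₄ →ₗ[ℝ] V₄, P ∈ Lp → Q ∈ Lm → ipE (R P) Q = 0) := by
  constructor
  · intro h
    have key : ∀ J₁ J₂ : V₄ →ₗ[ℝ] V₄, J₁ ∈ Lp → J₂ ∈ Lm →
        J₁ ∘ₗ J₁ = -LinearMap.id → J₂ ∘ₗ J₂ = -LinearMap.id → ∀ X Y Z U : V₄,
        ipE (R (A X Y - A (J₁ X) (J₁ Y))) (A Z U - A (J₂ Z) (J₂ U)) = 0 := by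
      intro J₁ J₂ h1 h2 h1s h2s X Y Z U
      have e1 := h J₁ J₂ h1 h2 h1s h2s X Y Z U
      have e2 := h (-J₁) J₂ (Lp.neg_mem h1) h2
        (by rw [LinearMap.neg_comp, LinearMap.comp_neg, neg_neg, h1s]) h2s X Y Z U
      simp only [LinearMap.neg_apply, A_neg_left, A_neg_right, neg_neg] at e2
      rw [← neg_add, map_neg, ipE_neg_left] at e2
      linarith
    have key2 : ∀ P Q : V₄ →ₗ[ℝ] V₄,
        (∃ J X Y, J ∈ Lp ∧ J ∘ₗ J = -LinearMap.id ∧ P = A X Y - A (J X) (J Y)) →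
        (∃ J X Y, J ∈ Lm ∧ J ∘ₗ J = -LinearMap.id ∧ Q = A X Y - A (J X) (J Y)) →
        ipB R P Q = 0 := by
      rintro P Q ⟨J₁, X, Y, h1, h1s, rfl⟩ ⟨J₂, Z, U, h2, h2s, rfl⟩
      exact key J₁ J₂ h1 h2 h1s h2s X Y Z U
    intro P Q hP hQ
    change ipB R P Q = 0
    obtain ⟨a, b, c, rfl⟩ := (mem_Lp P).1 hP
    obtain ⟨a', b', c', rfl⟩ := (mem_Lm Q).1 hQ
    simp only [map_add, map_smul, LinearMap.add_apply, LinearMap.smul_apply,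
      key2 _ _ S1p_eq S1m_eq, key2 _ _ S1p_eq S2m_eq, key2 _ _ S1p_eq S3m_eq,
      key2 _ _ S2p_eq S1m_eq, key2 _ _ S2p_eq S2m_eq, key2 _ _ S2p_eq S3m_eq,
      key2 _ _ S3p_eq S1m_eq, key2 _ _ S3p_eq S2m_eq, key2 _ _ S3p_eq S3m_eq,
      smul_zero, add_zero]
  · intro h J₁ J₂ h1 h2 h1s h2s X Y Z U
    rw [h _ _ (diff_mem_Lp J₁ h1 h1s X Y) (diff_mem_Lm J₂ h2 h2s Z U),
      h _ _ (sum_mem_Lp J₁ h1 X Y) (sum_mem_Lm J₂ h2 Z U), mul_zero]
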